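/- arXiv:math/9712242 — 2 statements merged into one kernel-verified Lean document; each statement's English description precedes it below -/
import Mathlib

section
/- Let q be a prime power with $q > n$, and let M be an invertible diagonal $n \times n$ matrix over $\mathbb{F}_q$ with n distinct eigenvalues. Then the number of complete flags $0 = V_0 \subset V_1 \subset \cdots \subset V_n = \mathbb{F}_q^n$ such that $M V_j \subseteq V_{j+1}$ for all $0 \le j \le n-1$ equals $\sum_{\pi \in S_n} q^{d(\pi)}$, the generating function for permutations of n letters by number of descents. -/
/-!
Adjoining a vector `v` to an `f`-invariant subspace `V` forces every further step of a flag until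
the least invariant subspace containing `V` and `v` is reached; as the eigenvalues are distinct,
that subspace is spanned by `V` and the eigenvectors in the support of `v`. Let `N S` be the number
of flags continuing the subspace of vectors that vanish on the coordinates in `S`. With `r = q - 1`,
counting vectors `v` by the trace `U` of their support on `S` gives
`r * N S = ∑ r ^ #U * N (S \ U)`, the sum being over nonempty `U ⊆ S`.

Arrangements of `S` weighted by `q ^ des` satisfy the same recurrence: write the weight of each
descent as `1 + r`, and let `U` consist of the letters `b₁ > b₂ > ⋯` of the longest initial run all
of whose descents contribute the summand `r`; the factor `r` in front of `N S` accounts for `b₁`.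
-/

/-- The number of descents of a permutation `π` of `{1, …, n}`: the number of indices
`i` with `1 ≤ i ≤ n-1` and `π(i) > π(i+1)` (here indexed by `Fin (n-1)`, zero-based). -/
def descents {n : ℕ} (π : Equiv.Perm (Fin n)) : ℕ :=
  (Finset.univ.filter fun i : Fin (n - 1) =>
    π ⟨(i : ℕ) + 1, by have := i.isLt; omega⟩ < π ⟨(i : ℕ), by have := i.isLt; omega⟩).card

/-- `hessFlagCount F m dg` is the number of complete flags
`0 = V₀ ⊂ V₁ ⊂ ⋯ ⊂ V_m = F^m` (with `dim Vᵢ = i`) such that `M Vⱼ ⊆ V_{j+1}` for all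
`0 ≤ j ≤ m - 1`, where `M` is the diagonal matrix with diagonal entries `dg`. -/
noncomputable def hessFlagCount (F : Type) [Field F] [Fintype F] [DecidableEq F]
    (m : ℕ) (dg : Fin m → F) : ℕ :=
  Nat.card {f : Fin (m + 1) → Submodule F (Fin m → F) //
    f 0 = ⊥ ∧ f (Fin.last m) = ⊤ ∧ Monotone f ∧
    (∀ i : Fin (m + 1), Module.finrank F (f i) = (i : ℕ)) ∧
    ∀ j : Fin m, (f j.castSucc).map (Matrix.diagonal dg).mulVecLin ≤ f j.succ}

open Finset Module

theorem sum_powerset_eq_sum_max {α M : Type*} [LinearOrder α] [AddCommMonoid M] (S : Finset α)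
    (g : Finset α → M) :
    ∑ U ∈ S.powerset, g U =
      g ∅ + ∑ b ∈ S, ∑ T ∈ ({x ∈ S | x < b} : Finset α).powerset, g (insert b T) := by
  induction S using Finset.induction_on_max with
  | empty => simp
  | insert m S hm ih =>
    have hmS : m ∉ S := fun h => (hm m h).false
    have below_max : ({x ∈ insert m S | x < m} : Finset α) = S := by
      rw [filter_insert, if_neg (lt_irrefl m), filter_true_of_mem hm]
    have below_mem : ∀ b ∈ S, ({x ∈ insert m S | x < b} : Finset α) = {x ∈ S | x < b} :=
      fun b hb => by rw [filter_insert, if_neg (hm b hb).asymm]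
    have old_terms : ∑ b ∈ S, ∑ T ∈ ({x ∈ insert m S | x < b} : Finset α).powerset,
          g (insert b T) = ∑ b ∈ S, ∑ T ∈ ({x ∈ S | x < b} : Finset α).powerset, g (insert b T) :=
      sum_congr rfl fun b hb => by rw [below_mem b hb]
    rw [sum_powerset_insert hmS, sum_insert hmS, below_max, old_terms, ih, add_right_comm,
      ← add_assoc]

theorem sum_piFinset_injective_succ {α M : Type*} [DecidableEq α] [AddCommMonoid M] (k : ℕ)
    (S : Finset α) (g : (Fin (k + 1) → α) → M) :
    ∑ w ∈ Fintype.piFinset (fun _ => S) with Function.Injective w, g w =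
      ∑ b ∈ S, ∑ w ∈ Fintype.piFinset (fun _ => S.erase b) with Function.Injective w,
        g (Fin.cons b w : Fin (k + 1) → α) := by
  rw [sum_sigma']
  refine sum_bij' (fun w _ => ⟨w 0, Fin.tail w⟩) (fun x _ => Fin.cons x.1 x.2) ?_ ?_ ?_ ?_ ?_
  · intro w hw
    simp only [mem_filter, Fintype.mem_piFinset] at hw
    obtain ⟨hwS, hinj⟩ := hw
    simp only [mem_sigma, mem_filter, Fintype.mem_piFinset, mem_erase]
    exact ⟨hwS 0, fun i => ⟨hinj.ne (Fin.succ_ne_zero i), hwS i.succ⟩,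
      hinj.comp (Fin.succ_injective k)⟩
  · rintro ⟨b, w⟩ hw
    simp only [mem_sigma, mem_filter, Fintype.mem_piFinset, mem_erase] at hw
    obtain ⟨hb, hwS, hinj⟩ := hw
    simp only [mem_filter, Fintype.mem_piFinset, Fin.forall_fin_succ, Fin.cons_zero, Fin.cons_succ,
      Fin.cons_injective_iff, Set.mem_range, not_exists]
    exact ⟨⟨hb, fun i => (hwS i).2⟩, fun i => (hwS i).1, hinj⟩
  · simp
  · simp
  · simp

/-- The weight `q ^ des(w)` of a nonempty word `w`, as a product over its adjacent pairs so that it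
splits off the first letter. -/
def descentWeight {α R : Type*} [LT α] [DecidableLT α] [CommMonoid R] (q : R) {k : ℕ}
    (w : Fin (k + 1) → α) : R :=
  ∏ i : Fin k, if w i.succ < w i.castSucc then q else 1

theorem descentWeight_cons {α R : Type*} [LT α] [DecidableLT α] [CommMonoid R] (q : R) {k : ℕ}
    (a : α) (w : Fin (k + 1) → α) :
    descentWeight q (Fin.cons a w : Fin (k + 2) → α) =
      (if w 0 < a then q else 1) * descentWeight q w := by
  rw [descentWeight, Fin.prod_univ_succ]
  rfl

theorem descentWeight_perm {R : Type*} [CommMonoid R] (q : R) {m : ℕ}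
    (π : Equiv.Perm (Fin (m + 1))) : descentWeight q π = q ^ descents π := by
  rw [descentWeight, prod_ite, prod_const_one, mul_one, prod_const]
  rfl

section DescentSum

variable {α R : Type*} [LinearOrder α] [CommSemiring R]

/-- The sum of `q ^ des(a w)` over all arrangements `w` of the letters of `S`, each read as the
continuation of a word ending in `a`. Taking `a = ⊥` creates no descent, so it stands for the
absence of a preceding letter. -/
def descentSum (q : R) (S : Finset α) (a : WithBot α) : R :=
  ∑ w ∈ Fintype.piFinset (fun _ : Fin #S => S) with Function.Injective w,
    descentWeight q (Fin.cons a ((↑) ∘ w) : Fin (#S + 1) → WithBot α)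

theorem descentSum_eq_of_card (q : R) {k : ℕ} {S : Finset α} (hS : #S = k) (a : WithBot α) :
    descentSum q S a = ∑ w ∈ Fintype.piFinset (fun _ : Fin k => S) with Function.Injective w,
      descentWeight q (Fin.cons a ((↑) ∘ w) : Fin (k + 1) → WithBot α) := by
  subst hS
  rfl

theorem descentSum_empty (q : R) (a : WithBot α) : descentSum q ∅ a = 1 := by
  rw [descentSum_eq_of_card q card_empty]
  simp [descentWeight, Function.injective_of_subsingleton]

theorem descentSum_eq_sum_first (q : R) {S : Finset α} (hS : S.Nonempty) (a : WithBot α) :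
    descentSum q S a =
      ∑ b ∈ S, (if (b : WithBot α) < a then q else 1) * descentSum q (S.erase b) b := by
  obtain ⟨k, hk⟩ := Nat.exists_eq_add_one_of_ne_zero (card_ne_zero.2 hS)
  rw [descentSum_eq_of_card q hk, sum_piFinset_injective_succ]
  refine sum_congr rfl fun b hb => ?_
  rw [descentSum_eq_of_card q (card_erase_of_mem hb |>.trans (by rw [hk, Nat.add_sub_cancel])),
    mul_sum]
  refine sum_congr rfl fun w _ => ?_
  rw [Fin.comp_cons, descentWeight_cons, Fin.cons_zero]

theorem descentSum_eq_add_sum_lt (r : R) (S : Finset α) (a : WithBot α) :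
    descentSum (r + 1) S a = descentSum (r + 1) S ⊥ +
      ∑ b ∈ ({b ∈ S | (b : WithBot α) < a} : Finset α), r * descentSum (r + 1) (S.erase b) b := by
  rcases S.eq_empty_or_nonempty with rfl | hS
  · simp [descentSum_empty]
  rw [descentSum_eq_sum_first _ hS, descentSum_eq_sum_first _ hS, sum_filter, ← sum_add_distrib]
  refine sum_congr rfl fun b _ => ?_
  rw [if_neg (not_lt_bot (a := (b : WithBot α)))]
  split_ifs <;> ring

theorem mul_sum_powerset_erase_lt (r : R) {S : Finset α} {b : α} (g : Finset α → R) :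
    r * ∑ T ∈ ({x ∈ S.erase b | x < b} : Finset α).powerset, r ^ #T * g (S.erase b \ T) =
      ∑ T ∈ ({x ∈ S | x < b} : Finset α).powerset, r ^ #(insert b T) * g (S \ insert b T) := by
  have below : ({x ∈ S.erase b | x < b} : Finset α) = {x ∈ S | x < b} := by
    rw [filter_erase, erase_eq_of_notMem fun h => (mem_filter.1 h).2.false]
  rw [below, mul_sum]
  refine sum_congr rfl fun T hT => ?_
  have hbT : b ∉ T := fun h => (mem_filter.1 (mem_powerset.1 hT h)).2.false
  rw [card_insert_of_notMem hbT, pow_succ', mul_assoc, erase_eq, sdiff_sdiff_left]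
  rfl

theorem descentSum_eq_sum_powerset (r : R) (S : Finset α) (a : WithBot α) :
    descentSum (r + 1) S a =
      ∑ T ∈ ({x ∈ S | (x : WithBot α) < a} : Finset α).powerset,
        r ^ #T * descentSum (r + 1) (S \ T) ⊥ := by
  induction S using Finset.strongInduction generalizing a with
  | H S ih =>
    rw [descentSum_eq_add_sum_lt, sum_powerset_eq_sum_max, card_empty, pow_zero, one_mul,
      sdiff_empty]
    congr 1
    refine sum_congr rfl fun b hb => ?_
    obtain ⟨hbS, hba⟩ := mem_filter.1 hb
    have below : ({x ∈ ({x ∈ S | (x : WithBot α) < a} : Finset α) | x < b} : Finset α) =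
        {x ∈ S | x < b} := by
      rw [filter_filter]
      exact filter_congr fun x _ =>
        and_iff_right_of_imp fun hxb => (WithBot.coe_lt_coe.2 hxb).trans hba
    rw [ih _ (erase_ssubset hbS), below,
      ← mul_sum_powerset_erase_lt r fun X => descentSum (r + 1) X ⊥]
    simp only [WithBot.coe_lt_coe]

theorem descentSum_recurrence (r : R) {S : Finset α} (hS : S.Nonempty) :
    r * descentSum (r + 1) S ⊥ =
      ∑ U ∈ S.powerset with U.Nonempty, r ^ #U * descentSum (r + 1) (S \ U) ⊥ := by
  have by_first : descentSum (r + 1) S ⊥ = ∑ b ∈ S, descentSum (r + 1) (S.erase b) b := by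
    simp [descentSum_eq_sum_first _ hS]
  rw [by_first, mul_sum, sum_filter, sum_powerset_eq_sum_max,
    if_neg Finset.not_nonempty_empty, zero_add]
  refine sum_congr rfl fun b _ => ?_
  simp only [insert_nonempty, if_true, descentSum_eq_sum_powerset r (S.erase b) b,
    WithBot.coe_lt_coe, mul_sum_powerset_erase_lt r fun X => descentSum (r + 1) X ⊥]

end DescentSum

theorem descentSum_univ {R : Type*} [CommSemiring R] (q : R) (n : ℕ) :
    descentSum q (univ : Finset (Fin n)) ⊥ = ∑ π : Equiv.Perm (Fin n), q ^ descents π := by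
  rcases n with _ | m
  · simp [descentSum_empty, descents]
  rw [descentSum_eq_of_card q (card_fin (m + 1)), Fintype.piFinset_univ]
  symm
  refine sum_bij (fun π _ => (π : Fin (m + 1) → Fin (m + 1))) ?_ ?_ ?_ ?_
  · exact fun π _ => mem_filter.2 ⟨mem_univ _, π.injective⟩
  · exact fun π _ σ _ h => DFunLike.coe_injective h
  · intro w hw
    exact ⟨Equiv.ofBijective w (Finite.injective_iff_bijective.1 (mem_filter.1 hw).2),
      mem_univ _, rfl⟩
  · intro π _
    rw [descentWeight_cons, if_neg (not_lt_bot), one_mul, ← descentWeight_perm]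
    simp [descentWeight]

section Chains

variable {α : Type*} (R : α → α → Prop)

/-- The number of sequences of `k` consecutive `R`-steps starting at `a`. -/
noncomputable def chainCount (k : ℕ) (a : α) : ℕ :=
  Nat.card {c : Fin (k + 1) → α // c 0 = a ∧ ∀ j : Fin k, R (c j.castSucc) (c j.succ)}

theorem chainCount_zero (a : α) : chainCount R 0 a = 1 := by
  rw [chainCount, Nat.card_eq_one_iff_unique]
  refine ⟨⟨fun c c' => Subtype.ext (funext fun i => ?_)⟩, ⟨fun _ => a, rfl, fun j => j.elim0⟩⟩
  rw [Fin.fin_one_eq_zero i, c.2.1, c'.2.1]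

/-- A sequence of `k + 1` steps from `a` is a first step `a → b` and a sequence of `k` steps
from `b`. -/
def chainConsEquiv (k : ℕ) (a : α) :
    {c : Fin (k + 2) → α // c 0 = a ∧ ∀ j : Fin (k + 1), R (c j.castSucc) (c j.succ)} ≃
      Σ b : {b // R a b},
        {c : Fin (k + 1) → α // c 0 = b ∧ ∀ j : Fin k, R (c j.castSucc) (c j.succ)} where
  toFun c := ⟨⟨c.1 1, by simpa [c.2.1] using c.2.2 0⟩, ⟨Fin.tail c.1, rfl, fun j => c.2.2 j.succ⟩⟩
  invFun x := ⟨Fin.cons a x.2.1, rfl, Fin.cases (by simpa [x.2.2.1] using x.1.2) x.2.2.2⟩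
  left_inv c := Subtype.ext (by simp [← c.2.1])
  right_inv := by
    rintro ⟨⟨b, hb⟩, ⟨c, hc, hR⟩⟩
    dsimp only at hc
    subst hc
    rfl

theorem chainCount_succ [Fintype α] (k : ℕ) (a : α) [DecidablePred (R a)] :
    chainCount R (k + 1) a = ∑ b with R a b, chainCount R k b := by
  rw [chainCount, Nat.card_congr (chainConsEquiv R k a), Nat.card_sigma,
    sum_subtype _ (p := R a) (by simp)]
  rfl

end Chains

section HessenbergChains

variable {K E : Type*} [Field K] [AddCommGroup E] [Module K E]

theorem sup_span_singleton_eq_iff_of_covBy {V W : Submodule K E} (h : V ⋖ W) {v : E} (hv : v ∉ V) :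
    V ⊔ K ∙ v = W ↔ v ∈ W := by
  constructor
  · rintro rfl
    exact Submodule.mem_sup_right (Submodule.mem_span_singleton_self v)
  · intro hvW
    have hle : V ⊔ K ∙ v ≤ W := sup_le h.le ((Submodule.span_singleton_le_iff_mem _ _).2 hvW)
    exact (h.eq_or_eq le_sup_left hle).resolve_left (by simpa using hv)

theorem submodule_covBy_iff_finrank [Module.Finite K E] {V W : Submodule K E} :
    V ⋖ W ↔ V ≤ W ∧ finrank K W = finrank K V + 1 := by
  constructor
  · intro h
    obtain ⟨w, hwW, hwV⟩ := SetLike.exists_of_lt h.lt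
    rw [← (sup_span_singleton_eq_iff_of_covBy h hwV).2 hwW]
    exact ⟨le_sup_left, Submodule.finrank_sup_span_singleton hwV⟩
  · rintro ⟨hle, hrank⟩
    refine ⟨lt_of_le_of_ne hle fun h => by subst h; omega, fun U hVU hUW => ?_⟩
    have := Submodule.finrank_lt_finrank_of_lt hVU
    have := Submodule.finrank_lt_finrank_of_lt hUW
    omega

open Classical in
theorem card_notMem_sup_span_singleton_eq [Fintype K] [Fintype E] {V W : Submodule K E}
    (h : V ⋖ W) :
    #{v | v ∉ V ∧ V ⊔ K ∙ v = W} = (Fintype.card K - 1) * Nat.card V := by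
  have fibre : ({v | v ∉ V ∧ V ⊔ K ∙ v = W} : Finset E) =
      ({v | v ∈ W} : Finset E) \ ({v | v ∈ V} : Finset E) := by
    ext v
    simp only [mem_filter, mem_univ, true_and, mem_sdiff, and_comm (a := v ∈ W)]
    exact and_congr_right fun hv => sup_span_singleton_eq_iff_of_covBy h hv
  have card_W : Nat.card W = Fintype.card K * Nat.card V := by
    rw [natCard_eq_pow_finrank (K := K), natCard_eq_pow_finrank (K := K) (V := V),
      (submodule_covBy_iff_finrank.1 h).2, pow_succ', Nat.card_eq_fintype_card]
  rw [fibre, card_sdiff_of_subset (monotone_filter_right _ fun v _ hv => h.le hv),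
    ← Fintype.card_subtype, ← Fintype.card_subtype, ← Nat.card_eq_fintype_card,
    ← Nat.card_eq_fintype_card, Nat.sub_one_mul]
  exact congrArg (· - _) card_W

open Classical in
theorem sum_sup_span_singleton [Fintype K] [Fintype E] (V : Submodule K E) {M : Type*}
    [AddCommMonoid M] (g : Submodule K E → M) :
    ∑ v with v ∉ V, g (V ⊔ K ∙ v) =
      ((Fintype.card K - 1) * Nat.card V) • ∑ W with V ⋖ W, g W := by
  have hmaps : ∀ v ∈ ({v | v ∉ V} : Finset E), V ⊔ K ∙ v ∈ ({W | V ⋖ W} : Finset _) :=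
    fun v hv => mem_filter.2 ⟨mem_univ _,
      sup_comm V (K ∙ v) ▸ Submodule.covBy_span_singleton_sup (mem_filter.1 hv).2⟩
  rw [← sum_fiberwise_of_maps_to' hmaps, smul_sum]
  refine sum_congr rfl fun W hW => ?_
  rw [sum_const, filter_filter, card_notMem_sup_span_singleton_eq (mem_filter.1 hW).2]

/-- `W` may follow `V` in a flag satisfying the Hessenberg condition `f Vⱼ ⊆ Vⱼ₊₁`. -/
def HessStep (f : End K E) (V W : Submodule K E) : Prop :=
  V ⋖ W ∧ V.map f ≤ W

theorem hessStep_iff_covBy {f : End K E} {V : Submodule K E} (hV : V ∈ f.invtSubmodule)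
    (W : Submodule K E) : HessStep f V W ↔ V ⋖ W :=
  and_iff_left_of_imp fun h => ((End.mem_invtSubmodule_iff_map_le f).1 hV).trans h.le

theorem hessStep_iff_eq_sup_map {f : End K E} {V : Submodule K E} (hV : V ⋖ V ⊔ V.map f)
    (W : Submodule K E) : HessStep f V W ↔ W = V ⊔ V.map f := by
  constructor
  · rintro ⟨hVW, hmap⟩
    exact ((hVW.eq_or_eq le_sup_left (sup_le hVW.le hmap)).resolve_left hV.ne').symm
  · rintro rfl
    exact ⟨hV, le_sup_right⟩

theorem HessStep.wcovBy_sup_map {f : End K E} {V W : Submodule K E} (h : HessStep f V W) :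
    W ⩿ W ⊔ W.map f := by
  obtain ⟨hVW, hmap⟩ := h
  obtain ⟨u, huW, huV⟩ := SetLike.exists_of_lt hVW.lt
  have hW : V ⊔ K ∙ u = W := (sup_span_singleton_eq_iff_of_covBy hVW huV).2 huW
  have hsup : W ⊔ W.map f = K ∙ f u ⊔ W := by
    conv_lhs => rw [← hW, Submodule.map_sup, Submodule.map_span, Set.image_singleton, hW]
    rw [← sup_assoc, sup_eq_left.2 hmap, sup_comm]
  exact hsup ▸ Submodule.wcovBy_span_singleton_sup (f u) W

/-- The number of ways to complete `V` to a full flag of `E` by Hessenberg steps for `f`. The chains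
have length the codimension of `V`, which forces them to end at `⊤`. -/
noncomputable def hessChainCount (f : End K E) (V : Submodule K E) : ℕ :=
  chainCount (HessStep f) (finrank K (E ⧸ V)) V

theorem hessChainCount_top (f : End K E) : hessChainCount f ⊤ = 1 := by
  rw [hessChainCount, finrank_zero_of_subsingleton, chainCount_zero]

open Classical in
theorem hessChainCount_eq_sum [Fintype E] (f : End K E) {V : Submodule K E} (hV : V ≠ ⊤) :
    hessChainCount f V = ∑ W with HessStep f V W, hessChainCount f W := by
  have codim_pos : finrank K (E ⧸ V) ≠ 0 := by
    have := Submodule.Quotient.nontrivial_iff.2 hV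
    exact finrank_pos.ne'
  obtain ⟨k, hk⟩ := Nat.exists_eq_add_one_of_ne_zero codim_pos
  rw [hessChainCount, hk, chainCount_succ]
  refine sum_congr rfl fun W hW => ?_
  have codim_W : finrank K (E ⧸ W) = k := by
    have := (submodule_covBy_iff_finrank.1 (mem_filter.1 hW).2.1).2
    have := V.finrank_quotient_add_finrank
    have := W.finrank_quotient_add_finrank
    omega
  rw [hessChainCount, codim_W]

theorem hessChainCount_eq_of_isLeast [Finite E] {f : End K E} {U V : Submodule K E}
    (hV : V ⩿ V ⊔ V.map f) (hU : IsLeast {X | V ≤ X ∧ X ∈ f.invtSubmodule} U) :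
    hessChainCount f V = hessChainCount f U := by
  classical
  have := Fintype.ofFinite E
  induction V using WellFoundedGT.induction with
  | ind V ih =>
    by_cases hinv : V ∈ f.invtSubmodule
    · rw [hU.1.1.antisymm (hU.2 ⟨le_rfl, hinv⟩)]
    · have hmap : ¬ V.map f ≤ V := fun h => hinv ((End.mem_invtSubmodule_iff_map_le f).2 h)
      have hcov : V ⋖ V ⊔ V.map f := hV.covBy_of_lt (left_lt_sup.2 hmap)
      have same_invariants : {X | V ⊔ V.map f ≤ X ∧ X ∈ f.invtSubmodule} =
          {X | V ≤ X ∧ X ∈ f.invtSubmodule} := by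
        ext X
        refine and_congr_left fun hX => ⟨le_sup_left.trans, fun hVX => sup_le hVX ?_⟩
        exact (Submodule.map_mono hVX).trans ((End.mem_invtSubmodule_iff_map_le f).1 hX)
      rw [hessChainCount_eq_sum f (by rintro rfl; exact hmap le_top),
        filter_congr fun W _ => hessStep_iff_eq_sup_map hcov W, filter_eq', if_pos (mem_univ _),
        sum_singleton]
      exact ih _ hcov.lt ((hessStep_iff_eq_sup_map hcov _).2 rfl).wcovBy_sup_map
        (same_invariants ▸ hU)

end HessenbergChains

section Eigenbasis

variable {ι K E : Type*} [Field K] [AddCommGroup E] [Module K E]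

/-- The coordinate subspace of the vectors whose coordinates in `S` with respect to `b` vanish. -/
def vanishingOn (b : Basis ι K E) (S : Finset ι) : Submodule K E :=
  Submodule.span K (b '' (S : Set ι)ᶜ)

theorem mem_vanishingOn {b : Basis ι K E} {S : Finset ι} {v : E} :
    v ∈ vanishingOn b S ↔ Disjoint (b.repr v).support S := by
  rw [vanishingOn, Basis.mem_span_image, Set.subset_compl_iff_disjoint_right, disjoint_coe]

theorem vanishingOn_empty (b : Basis ι K E) : vanishingOn b ∅ = ⊤ := by
  simp [vanishingOn]

theorem vanishingOn_univ [Fintype ι] (b : Basis ι K E) : vanishingOn b univ = ⊥ := by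
  simp [vanishingOn]

variable {f : End K E} {b : Basis ι K E} {d : ι → K}

theorem vanishingOn_mem_invtSubmodule (hb : ∀ i, f (b i) = d i • b i) (S : Finset ι) :
    vanishingOn b S ∈ f.invtSubmodule := by
  rw [End.mem_invtSubmodule, vanishingOn, Submodule.span_le]
  rintro _ ⟨i, hi, rfl⟩
  rw [SetLike.mem_coe, Submodule.mem_comap, hb]
  exact Submodule.smul_mem _ _ (Submodule.subset_span ⟨i, hi, rfl⟩)

open Polynomial in
theorem aeval_lagrangeBasis_eigenbasis [Fintype ι] [DecidableEq ι]
    (hb : ∀ i, f (b i) = d i • b i) (hd : Function.Injective d) (i : ι) (v : E) :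
    aeval f (Lagrange.basis univ d i) v = b.repr v i • b i := by
  have eigen (j : ι) : aeval f (Lagrange.basis univ d i) (b j) = if j = i then b i else 0 := by
    rw [End.aeval_apply_of_hasEigenvector ⟨End.mem_eigenspace_iff.2 (hb j), b.ne_zero j⟩]
    split_ifs with h
    · rw [h, Lagrange.eval_basis_self hd.injOn (mem_univ i), one_smul]
    · rw [Lagrange.eval_basis_of_ne (Ne.symm h) (mem_univ j), zero_smul]
  calc aeval f (Lagrange.basis univ d i) v
      = ∑ j, b.repr v j • aeval f (Lagrange.basis univ d i) (b j) := by
        simp only [← map_smul, ← map_sum, b.sum_repr]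
    _ = b.repr v i • b i := by simp [eigen]

theorem eigenbasis_mem_of_mem_support [Finite ι] (hb : ∀ i, f (b i) = d i • b i)
    (hd : Function.Injective d) {X : Submodule K E} (hX : X ∈ f.invtSubmodule) {v : E}
    (hv : v ∈ X) {i : ι} (hi : i ∈ (b.repr v).support) : b i ∈ X := by
  classical
  have := Fintype.ofFinite ι
  rw [← X.smul_mem_iff (Finsupp.mem_support_iff.1 hi), ← aeval_lagrangeBasis_eigenbasis hb hd]
  exact Polynomial.aeval_apply_smul_mem_of_le_comap hv _ _ hX

theorem isLeast_invtSubmodule_vanishingOn_sup_span [Finite ι] [DecidableEq ι]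
    (hb : ∀ i, f (b i) = d i • b i) (hd : Function.Injective d) (S : Finset ι) (v : E) :
    IsLeast {X | vanishingOn b S ⊔ K ∙ v ≤ X ∧ X ∈ f.invtSubmodule}
      (vanishingOn b (S \ (b.repr v).support)) := by
  refine ⟨⟨sup_le (Submodule.span_mono ?_) ?_, vanishingOn_mem_invtSubmodule hb _⟩, ?_⟩
  · exact Set.image_mono (Set.compl_subset_compl.2 (coe_subset.2 sdiff_subset))
  · exact (Submodule.span_singleton_le_iff_mem _ _).2 (mem_vanishingOn.2 disjoint_sdiff)
  · rintro X ⟨hX, hinv⟩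
    refine Submodule.span_le.2 ?_
    rintro _ ⟨i, hi, rfl⟩
    by_cases hiS : i ∈ S
    · have hiv : i ∈ (b.repr v).support := by simpa [hiS] using hi
      exact eigenbasis_mem_of_mem_support hb hd hinv
        (hX (Submodule.mem_sup_right (Submodule.mem_span_singleton_self v))) hiv
    · exact hX (Submodule.mem_sup_left (Submodule.subset_span ⟨i, hiS, rfl⟩))

theorem card_support_inter_eq [Fintype ι] [DecidableEq ι] [Fintype K] [Fintype E]
    (b : Basis ι K E) {S U : Finset ι} (hU : U ⊆ S) :
    #{v | S ∩ (b.repr v).support = U} = (Fintype.card K - 1) ^ #U * Fintype.card K ^ #Sᶜ := by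
  classical
  let allowed (i : ι) : Finset K := if i ∈ U then {0}ᶜ else if i ∈ S then {0} else univ
  have coords : #{v | S ∩ (b.repr v).support = U} = #(Fintype.piFinset allowed) := by
    refine card_equiv b.equivFun.toEquiv fun v => ?_
    simp only [mem_filter, mem_univ, true_and, Fintype.mem_piFinset, Finset.ext_iff, mem_inter,
      Finsupp.mem_support_iff]
    refine forall_congr' fun i => ?_
    by_cases hi : i ∈ U
    · simp [allowed, hi, hU hi]
    · by_cases hiS : i ∈ S <;> simp [allowed, hi, hiS]
  have card_allowed (i : ι) : #(allowed i) =
      (if i ∈ U then Fintype.card K - 1 else 1) * if i ∈ Sᶜ then Fintype.card K else 1 := by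
    by_cases hi : i ∈ U
    · simp [allowed, hi, hU hi, card_compl]
    · by_cases hiS : i ∈ S <;> simp [allowed, hi, hiS]
  simp only [coords, Fintype.card_piFinset, card_allowed, prod_mul_distrib, prod_ite_mem,
    univ_inter, prod_const]

theorem card_vanishingOn [Fintype ι] [DecidableEq ι] [Fintype K] (b : Basis ι K E) (S : Finset ι) :
    Nat.card (vanishingOn b S) = Fintype.card K ^ #Sᶜ := by
  have := Module.fintypeOfFintype b
  have no_support : {v | v ∈ vanishingOn b S} = {v | S ∩ (b.repr v).support = ∅} := by
    simp only [mem_vanishingOn, disjoint_comm, disjoint_iff_inter_eq_empty]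
  calc Nat.card (vanishingOn b S) = Nat.card {v | S ∩ (b.repr v).support = ∅} :=
        congrArg (fun s : Set E => Nat.card s) no_support
    _ = #{v | S ∩ (b.repr v).support = ∅} := Nat.subtype_card _ (by simp)
    _ = Fintype.card K ^ #Sᶜ := by simp [card_support_inter_eq b (empty_subset S)]

open Classical in
theorem sum_notMem_vanishingOn [Finite ι] [DecidableEq ι] [Fintype K] [Fintype E]
    (b : Basis ι K E) (S : Finset ι) {M : Type*} [AddCommMonoid M] (g : Finset ι → M) :
    ∑ v with v ∉ vanishingOn b S, g (S \ (b.repr v).support) =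
      Nat.card (vanishingOn b S) •
        ∑ U ∈ S.powerset with U.Nonempty, (Fintype.card K - 1) ^ #U • g (S \ U) := by
  have := Fintype.ofFinite ι
  have notMem_iff (v : E) : v ∉ vanishingOn b S ↔ (S ∩ (b.repr v).support).Nonempty := by
    rw [mem_vanishingOn, disjoint_comm, not_disjoint_iff_nonempty_inter]
  have trace_mem : ∀ v ∈ ({v | v ∉ vanishingOn b S} : Finset E),
      S ∩ (b.repr v).support ∈ ({U ∈ S.powerset | U.Nonempty} : Finset (Finset ι)) :=
    fun v hv => mem_filter.2 ⟨mem_powerset.2 inter_subset_left,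
      (notMem_iff v).1 (mem_filter.1 hv).2⟩
  simp only [← sdiff_inter_self_left S (b.repr _).support]
  rw [← sum_fiberwise_of_maps_to' trace_mem fun U => g (S \ U), smul_sum]
  refine sum_congr rfl fun U hU => ?_
  obtain ⟨hUS, hU⟩ := mem_filter.1 hU
  have notMem_of_trace (v : E) (hv : S ∩ (b.repr v).support = U) : v ∉ vanishingOn b S :=
    (notMem_iff v).2 (hv ▸ hU)
  rw [sum_const, filter_filter, filter_congr fun v _ => and_iff_right_of_imp (notMem_of_trace v),
    card_support_inter_eq b (mem_powerset.1 hUS), card_vanishingOn, mul_comm, mul_smul]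

theorem hessChainCount_vanishingOn_recurrence [Finite ι] [DecidableEq ι] [Fintype K]
    (hb : ∀ i, f (b i) = d i • b i) (hd : Function.Injective d) {S : Finset ι}
    (hS : S.Nonempty) :
    (Fintype.card K - 1) * hessChainCount f (vanishingOn b S) =
      ∑ U ∈ S.powerset with U.Nonempty,
        (Fintype.card K - 1) ^ #U * hessChainCount f (vanishingOn b (S \ U)) := by
  classical
  have := Fintype.ofFinite ι
  have := Module.fintypeOfFintype b
  set V := vanishingOn b S with hV
  have hVinv : V ∈ f.invtSubmodule := vanishingOn_mem_invtSubmodule hb S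
  have hV_ne_top : V ≠ ⊤ := by
    obtain ⟨i, hi⟩ := hS
    intro h
    have : b i ∈ V := h ▸ Submodule.mem_top
    simp [hV, mem_vanishingOn, hi] at this
  have adjoin (v : E) (hv : v ∉ V) : hessChainCount f (V ⊔ K ∙ v) =
      hessChainCount f (vanishingOn b (S \ (b.repr v).support)) := by
    have step : HessStep f V (V ⊔ K ∙ v) := (hessStep_iff_covBy hVinv _).2
      (sup_comm V (K ∙ v) ▸ Submodule.covBy_span_singleton_sup hv)
    exact hessChainCount_eq_of_isLeast step.wcovBy_sup_map
      (isLeast_invtSubmodule_vanishingOn_sup_span hb hd S v)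
  refine Nat.eq_of_mul_eq_mul_left (Nat.card_pos (α := V)) ?_
  calc Nat.card V * ((Fintype.card K - 1) * hessChainCount f V)
      = (Fintype.card K - 1) * Nat.card V * ∑ W with V ⋖ W, hessChainCount f W := by
        rw [hessChainCount_eq_sum f hV_ne_top, filter_congr fun W _ => hessStep_iff_covBy hVinv W,
          mul_left_comm, mul_assoc]
    _ = ∑ v with v ∉ V, hessChainCount f (V ⊔ K ∙ v) := (sum_sup_span_singleton V _).symm
    _ = ∑ v with v ∉ V, hessChainCount f (vanishingOn b (S \ (b.repr v).support)) :=
        sum_congr rfl fun v hv => adjoin v (mem_filter.1 hv).2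
    _ = _ := sum_notMem_vanishingOn b S fun T => hessChainCount f (vanishingOn b T)

theorem hessChainCount_vanishingOn [Finite ι] [LinearOrder ι] [Fintype K]
    (hb : ∀ i, f (b i) = d i • b i) (hd : Function.Injective d) (S : Finset ι) :
    hessChainCount f (vanishingOn b S) = descentSum (Fintype.card K) S ⊥ := by
  have one_lt_card : 1 < Fintype.card K := Fintype.one_lt_card
  induction S using Finset.strongInduction with
  | H S ih =>
    rcases S.eq_empty_or_nonempty with rfl | hS
    · rw [vanishingOn_empty, hessChainCount_top, descentSum_empty]
    refine Nat.eq_of_mul_eq_mul_left (Nat.sub_pos_of_lt one_lt_card) ?_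
    rw [hessChainCount_vanishingOn_recurrence hb hd hS]
    have recurrence := descentSum_recurrence (Fintype.card K - 1) hS
    rw [Nat.sub_add_cancel one_lt_card.le] at recurrence
    rw [recurrence]
    refine sum_congr rfl fun U hU => ?_
    obtain ⟨hUS, hU⟩ := mem_filter.1 hU
    rw [ih _ (sdiff_ssubset (mem_powerset.1 hUS) hU)]

end Eigenbasis

theorem hessFlagCount_eq_hessChainCount (F : Type) [Field F] [Fintype F] [DecidableEq F] (n : ℕ)
    (d : Fin n → F) :
    hessFlagCount F n d = hessChainCount (Matrix.diagonal d).mulVecLin ⊥ := by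
  have codim_bot : finrank F ((Fin n → F) ⧸ (⊥ : Submodule F (Fin n → F))) = n := by
    have := (⊥ : Submodule F (Fin n → F)).finrank_quotient_add_finrank
    simpa using this
  rw [hessChainCount, codim_bot]
  refine Nat.card_congr (Equiv.subtypeEquivRight fun c => ?_)
  constructor
  · rintro ⟨hbot, -, hmono, hrank, hstep⟩
    refine ⟨hbot, fun j => ⟨submodule_covBy_iff_finrank.2 ⟨?_, ?_⟩, hstep j⟩⟩
    · exact hmono (Fin.castSucc_lt_succ (i := j)).le
    · simp [hrank]
  · rintro ⟨hbot, hstep⟩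
    have hrank (i : Fin (n + 1)) : finrank F (c i) = i := by
      induction i using Fin.induction with
      | zero => simp [hbot]
      | succ j ih => rw [(submodule_covBy_iff_finrank.1 (hstep j).1).2, ih]; simp
    refine ⟨hbot, Submodule.eq_top_of_finrank_eq (by simp [hrank]), ?_, hrank,
      fun j => (hstep j).2⟩
    exact Fin.monotone_iff_le_succ.2 fun j => (hstep j).1.le

theorem hessFlagCount_eq_descent_generating_function_general {K E : Type*} [Field K] [Fintype K]
    [AddCommGroup E] [Module K E] {n : ℕ} {f : End K E} {b : Basis (Fin n) K E} {d : Fin n → K}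
    (hb : ∀ i, f (b i) = d i • b i) (hd : Function.Injective d) :
    hessChainCount f ⊥ = ∑ π : Equiv.Perm (Fin n), Fintype.card K ^ descents π := by
  rw [← vanishingOn_univ b, hessChainCount_vanishingOn hb hd, descentSum_univ]

/-- Let `q > n` be a prime power and `M` an invertible diagonal `n × n` matrix over `𝔽_q`
with `n` distinct (nonzero) eigenvalues. The number of complete flags of `𝔽_q^n` with
`M Vⱼ ⊆ V_{j+1}` for all `j` equals `∑_{π ∈ Sₙ} q^{d(π)}`, the generating function for
permutations by descents (the `𝔽_q`-point count of the Hessenberg variety `Hess(n,1)`). -/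
theorem hessFlagCount_eq_descent_generating_function (F : Type) [Field F] [Fintype F]
    [DecidableEq F] (n q : ℕ) (hq : Fintype.card F = q) (hn : n < q)
    (d : Fin n → F) (hinj : Function.Injective d) (h0 : ∀ j, d j ≠ 0) :
    hessFlagCount F n d = ∑ π : Equiv.Perm (Fin n), q ^ descents π := by
  have eigenbasis (i : Fin n) : (Matrix.diagonal d).mulVecLin (Pi.basisFun F (Fin n) i) =
      d i • Pi.basisFun F (Fin n) i := by
    simp [Pi.basisFun_apply, ← Pi.single_smul]
  rw [hessFlagCount_eq_hessChainCount,
    hessFlagCount_eq_descent_generating_function_general eigenbasis hinj, hq]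
end

section
/- Fix integers n and p with $1 \le p \le n-1$. Let q be a prime power with $q > n$, and let M be an invertible diagonal $n \times n$ matrix over $\mathbb{F}_q$ with n distinct eigenvalues. Then the number of complete flags $0 = V_0 \subset V_1 \subset \cdots \subset V_n = \mathbb{F}_q^n$ such that $M V_i \subseteq V_{i+p}$ for all i (with $V_j = \mathbb{F}_q^n$ for $j \ge n$) equals $\sum_{\pi \in S_n} q^{\,|\{(i,j) : 1 \le i < j \le n,\ j - i \le p,\ \pi(i) > \pi(j)\}|}$. -/
/-- `hessFlagCountP F n p dg` is the number of complete flags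
`0 = V₀ ⊂ V₁ ⊂ ⋯ ⊂ Vₙ = F^n` (with `dim Vᵢ = i`) such that `M Vᵢ ⊆ V_{i+p}` for all `i`
(with `Vⱼ = F^n` for `j ≥ n`), where `M` is the diagonal matrix with diagonal `dg`.
This is the `F`-point count of the Hessenberg variety `Hess(n, p)`. -/
noncomputable def hessFlagCountP (F : Type) [Field F] [Fintype F] [DecidableEq F]
    (n p : ℕ) (dg : Fin n → F) : ℕ :=
  Nat.card {f : Fin (n + 1) → Submodule F (Fin n → F) //
    f 0 = ⊥ ∧ f (Fin.last n) = ⊤ ∧ Monotone f ∧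
    (∀ i : Fin (n + 1), Module.finrank F (f i) = (i : ℕ)) ∧
    ∀ i : Fin (n + 1), (f i).map (Matrix.diagonal dg).mulVecLin ≤
      f ⟨min ((i : ℕ) + p) n, Nat.lt_succ_of_le (min_le_right _ _)⟩}

/-!
Let `e` be a basis of eigenvectors of `T`. By Gaussian elimination every complete flag is the flag
of a unique basis in reduced echelon form with respect to `e`; its pivots form a permutation `w`
and its coordinates a matrix `u` in `U⁻ ∩ w⁻¹ U w`, so the flags with pivots `w` form the Schubert
cell of `w`. In the reduced basis `T` has matrix `u⁻¹ D u`, where `D` is the diagonal matrix of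
the eigenvalues permuted by `w`, and the Hessenberg condition says that certain entries of it
vanish. Since the eigenvalues are distinct, `u ↦ u⁻¹ D u` is injective, hence by counting a
bijection onto the matrices of the same shape as `u` with the diagonal of `D`. There the free
entries are indexed by the inversions of `w`, and the Hessenberg condition leaves free exactly
those it does not force to be zero.
-/

open Module Matrix Finset

section Supported

variable {ι R : Type*} [DecidableEq ι]

/-- The affine space of matrices that agree with `diagonal e` in every position (row `j`,
column `i`) for which `r i j` fails. The column is the first argument of `r`, so that a pair
`i < j` names an entry below the diagonal. -/
def supportedOn [Zero R] (r : ι → ι → Prop) (e : ι → R) : Set (Matrix ι ι R) :=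
  {A | ∀ i j, ¬ r i j → A j i = diagonal e j i}

theorem ncard_supportedOn [Finite ι] [Zero R] (r : ι → ι → Prop) (e : ι → R) :
    (supportedOn r e).ncard = Nat.card R ^ Nat.card {ij : ι × ι // r ij.1 ij.2} := by
  classical
  let entries : Matrix ι ι R ≃ (ι × ι → R) :=
    ((Equiv.piComm _).trans (Equiv.curry _ _ _).symm)
  let free : supportedOn r e ≃ ({ij : ι × ι // ¬¬ r ij.1 ij.2} → R) :=
    (entries.subtypeEquiv fun A => by
      simp only [supportedOn, Set.mem_ofPred_eq, funext_iff, Subtype.forall, Prod.forall]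
      rfl).trans
      (Equiv.subtypePreimage (fun ij : ι × ι => ¬ r ij.1 ij.2)
        fun ij => diagonal e ij.1.2 ij.1.1)
  rw [← Nat.card_coe_set_eq, Nat.card_congr free, Nat.card_fun]
  simp only [not_not]

theorem mem_supportedOn_and_iff [Zero R] {r s : ι → ι → Prop} (hs : ∀ i, s i i) {e : ι → R}
    {A : Matrix ι ι R} :
    A ∈ supportedOn (fun i j => r i j ∧ s i j) e ↔
      A ∈ supportedOn r e ∧ ∀ i j, ¬ s i j → A j i = 0 := by
  refine ⟨fun hA => ⟨fun i j h => hA i j fun h' => h h'.1, fun i j h => ?_⟩, ?_⟩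
  · rw [hA i j fun h' => h h'.2, diagonal_apply_ne]
    rintro rfl
    exact h (hs _)
  · rintro ⟨hr, hA⟩ i j h
    by_cases hs' : s i j
    · exact hr i j fun h' => h ⟨h', hs'⟩
    · rw [hA i j hs', diagonal_apply_ne]
      rintro rfl
      exact hs' (hs _)

theorem isDiag_of_commute_diagonal [Fintype ι] [CommRing R] [NoZeroDivisors R] {e : ι → R}
    (he : Function.Injective e) {A : Matrix ι ι R} (h : Commute (diagonal e) A) : A.IsDiag := by
  intro i j hij
  have hentry : e i * A i j = A i j * e j := by
    simpa only [diagonal_mul, mul_diagonal] using congrFun (congrFun h.eq i) j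
  have : (e i - e j) * A i j = 0 := by rw [sub_mul, hentry, mul_comm, sub_self]
  exact (mul_eq_zero.1 this).resolve_left (sub_ne_zero.2 (he.ne hij))

end Supported

section Triangular

variable {ι R α : Type*} [LinearOrder ι] [LinearOrder α]

/-- The pair `(i, j)` is an inversion of `w`. -/
def IsInversion (w : ι → α) (i j : ι) : Prop := i < j ∧ w j < w i

/-- The matrices with diagonal `e` that are lower triangular for the order of `ι` and upper
triangular for the order pulled back along `w`. For a permutation `w` and `e = 1` this is the
unipotent group `U⁻ ∩ w⁻¹ U w` parametrizing the Schubert cell of `w`. -/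
def bitriangular [Zero R] (w : ι → α) (e : ι → R) : Set (Matrix ι ι R) :=
  {A | A.IsLowerTriangular ∧ A.BlockTriangular w ∧ A.diag = e}

theorem bitriangular_eq_supportedOn [Zero R] {w : ι → α} (hw : Function.Injective w)
    (e : ι → R) : bitriangular w e = supportedOn (IsInversion w) e := by
  ext A
  constructor
  · rintro ⟨hlower, hupper, rfl⟩ i j hij
    rcases lt_trichotomy i j with h | rfl | h
    · rw [diagonal_apply_ne _ h.ne']
      exact hupper ((hw.ne h.ne).lt_of_le (not_lt.1 fun h' => hij ⟨h, h'⟩))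
    · simp
    · rw [diagonal_apply_ne _ h.ne, hlower (OrderDual.toDual_lt_toDual.2 h)]
  · intro hA
    refine ⟨fun j i h => ?_, fun j i h => ?_, funext fun i => ?_⟩
    · have hji : j < i := OrderDual.toDual_lt_toDual.1 h
      rw [hA i j fun h' => h'.1.asymm hji, diagonal_apply_ne _ hji.ne]
    · rw [hA i j fun h' => h'.2.asymm h, diagonal_apply_ne']
      exact fun hij => h.ne (congrArg w hij)
    · simpa using hA i i fun h => lt_irrefl _ h.1

variable {w : ι → α}

theorem diagonal_mem_bitriangular [Zero R] (e : ι → R) : diagonal e ∈ bitriangular w e :=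
  ⟨blockTriangular_diagonal e, blockTriangular_diagonal e, diag_diagonal e⟩

variable [Fintype ι]

theorem diag_mul_of_isLowerTriangular [NonUnitalNonAssocSemiring R] {A B : Matrix ι ι R}
    (hA : A.IsLowerTriangular) (hB : B.IsLowerTriangular) : (A * B).diag = A.diag * B.diag := by
  ext i
  rw [diag_apply, mul_apply, sum_eq_single i]
  · rfl
  · intro k _ hki
    rcases hki.lt_or_gt with h | h
    · rw [hB (OrderDual.toDual_lt_toDual.2 h), mul_zero]
    · rw [hA (OrderDual.toDual_lt_toDual.2 h), zero_mul]
  · simp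

theorem mul_mem_bitriangular [NonUnitalNonAssocSemiring R] {a b : ι → R} {A B : Matrix ι ι R}
    (hA : A ∈ bitriangular w a) (hB : B ∈ bitriangular w b) : A * B ∈ bitriangular w (a * b) :=
  ⟨hA.1.mul hB.1, hA.2.1.mul hB.2.1, by
    rw [diag_mul_of_isLowerTriangular hA.1 hB.1, hA.2.2, hB.2.2]⟩

variable [CommRing R]

theorem isUnit_det_of_mem_bitriangular_one {A : Matrix ι ι R}
    (hA : A ∈ bitriangular w (1 : ι → R)) : IsUnit A.det := by
  have hdiag (i : ι) : A i i = 1 := congrFun hA.2.2 i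
  simp [det_of_isLowerTriangular A hA.1, hdiag]

theorem inv_mem_bitriangular_one {A : Matrix ι ι R} (hA : A ∈ bitriangular w (1 : ι → R)) :
    A⁻¹ ∈ bitriangular w (1 : ι → R) := by
  have hdet := isUnit_det_of_mem_bitriangular_one hA
  let := A.invertibleOfIsUnitDet hdet
  have hlower : A⁻¹.IsLowerTriangular := blockTriangular_inv_of_blockTriangular hA.1
  refine ⟨hlower, blockTriangular_inv_of_blockTriangular hA.2.1, ?_⟩
  calc A⁻¹.diag = A.diag * A⁻¹.diag := by rw [hA.2.2, one_mul]
    _ = (A * A⁻¹).diag := (diag_mul_of_isLowerTriangular hA.1 hlower).symm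
    _ = 1 := by rw [mul_nonsing_inv A hdet, diag_one]

theorem conj_diagonal_mem_bitriangular (e : ι → R) {u : Matrix ι ι R}
    (hu : u ∈ bitriangular w (1 : ι → R)) : u⁻¹ * diagonal e * u ∈ bitriangular w e := by
  simpa only [one_mul, mul_one] using mul_mem_bitriangular
    (mul_mem_bitriangular (inv_mem_bitriangular_one hu) (diagonal_mem_bitriangular e)) hu

theorem injOn_conj_diagonal [NoZeroDivisors R] {e : ι → R} (he : Function.Injective e) :
    Set.InjOn (fun u : Matrix ι ι R => u⁻¹ * diagonal e * u) (bitriangular w 1) := by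
  intro u hu v hv huv
  have huu : u * u⁻¹ = 1 := mul_nonsing_inv u (isUnit_det_of_mem_bitriangular_one hu)
  have hvdet := isUnit_det_of_mem_bitriangular_one hv
  have hcomm : Commute (diagonal e) (u * v⁻¹) :=
    calc diagonal e * (u * v⁻¹) = u * (u⁻¹ * diagonal e * u) * v⁻¹ := by
          simp only [← mul_assoc, huu, one_mul]
      _ = u * (v⁻¹ * diagonal e * v) * v⁻¹ := congrArg (u * · * v⁻¹) huv
      _ = u * v⁻¹ * diagonal e * (v * v⁻¹) := by simp only [mul_assoc]
      _ = u * v⁻¹ * diagonal e := by rw [mul_nonsing_inv v hvdet, mul_one]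
  have hdiag : (u * v⁻¹).diag = 1 := by
    simpa only [mul_one] using (mul_mem_bitriangular hu (inv_mem_bitriangular_one hv)).2.2
  have hone : u * v⁻¹ = 1 := by
    rw [← (isDiag_of_commute_diagonal he hcomm).diagonal_diag, hdiag, ← diagonal_one]
    rfl
  calc u = u * v⁻¹ * v := (nonsing_inv_mul_cancel_right v u hvdet).symm
    _ = v := by rw [hone, one_mul]

theorem bijOn_conj_diagonal [NoZeroDivisors R] [Finite R] (hw : Function.Injective w) {e : ι → R}
    (he : Function.Injective e) :
    Set.BijOn (fun u : Matrix ι ι R => u⁻¹ * diagonal e * u)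
      (bitriangular w 1) (bitriangular w e) := by
  have hmaps : Set.MapsTo (fun u : Matrix ι ι R => u⁻¹ * diagonal e * u)
      (bitriangular w 1) (bitriangular w e) := fun _ => conj_diagonal_mem_bitriangular e
  have hinj := injOn_conj_diagonal (w := w) he
  refine ⟨hmaps, hinj, (Set.eq_of_subset_of_ncard_le hmaps.image_subset ?_).ge⟩
  rw [hinj.ncard_image, bitriangular_eq_supportedOn hw, bitriangular_eq_supportedOn hw,
    ncard_supportedOn, ncard_supportedOn]

theorem ncard_conj_diagonal_mem_supportedOn [NoZeroDivisors R] [Finite R]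
    (hw : Function.Injective w) {e : ι → R} (he : Function.Injective e) (s : ι → ι → Prop) :
    {u ∈ bitriangular w (1 : ι → R) | u⁻¹ * diagonal e * u ∈
        supportedOn (fun i j => IsInversion w i j ∧ s i j) e}.ncard =
      Nat.card R ^ Nat.card {ij : ι × ι // IsInversion w ij.1 ij.2 ∧ s ij.1 ij.2} := by
  have hsub : supportedOn (fun i j => IsInversion w i j ∧ s i j) e ⊆ bitriangular w e := by
    rw [bitriangular_eq_supportedOn hw]
    exact fun A hA i j h => hA i j fun h' => h h'.1
  rw [← ncard_supportedOn (fun i j => IsInversion w i j ∧ s i j) e]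
  exact ((bijOn_conj_diagonal hw he).subset_right hsub).ncard_eq

end Triangular

section FlagCoordinates

variable {R M : Type*} [CommRing R] [AddCommGroup M] [Module R M] {n : ℕ}

theorem mem_flag_iff (b : Basis (Fin n) R M) {i : Fin (n + 1)} {x : M} :
    x ∈ b.flag i ↔ ∀ l : Fin n, i ≤ l.castSucc → b.repr x l = 0 := by
  rw [Basis.flag, b.mem_span_image, Set.subset_def]
  refine forall_congr' fun l => ?_
  rw [mem_coe, Finsupp.mem_support_iff, Set.mem_ofPred_eq, ← not_le, not_imp_not]

theorem map_flag_le_iff (b : Basis (Fin n) R M) (T : M →ₗ[R] M) {h : Fin (n + 1) → Fin (n + 1)}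
    (hmono : Monotone h) :
    (∀ i, (b.flag i).map T ≤ b.flag (h i)) ↔
      ∀ k l : Fin n, h k.succ ≤ l.castSucc → LinearMap.toMatrix b b T l k = 0 := by
  simp only [Submodule.map_le_iff_le_comap, b.flag_le_iff, Submodule.mem_comap, mem_flag_iff,
    LinearMap.toMatrix_apply]
  refine ⟨fun H k l hkl => H k.succ k k.castSucc_lt_succ l hkl, fun H i k hki l hl => ?_⟩
  exact H k l ((hmono (Fin.castSucc_lt_iff_succ_le.1 hki)).trans hl)

theorem isUpperTriangular_toMatrix_of_flag_eq {b b' : Basis (Fin n) R M} (h : b.flag = b'.flag) :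
    (b.toMatrix b').IsUpperTriangular := by
  intro l k hkl
  have hmem : b' k ∈ b.flag k.succ := h ▸ b'.self_mem_flag k.castSucc_lt_succ
  exact mem_flag_iff b |>.1 hmem l (Fin.succ_le_castSucc_iff.2 hkl)

theorem isUnit_toMatrix_apply_self_of_flag_eq {b b' : Basis (Fin n) R M} (h : b.flag = b'.flag)
    (k : Fin n) : IsUnit (b.toMatrix b' k k) := by
  have hdet : IsUnit (b.toMatrix b').det := by
    let := b.invertibleToMatrix b'
    exact isUnit_det_of_invertible _
  rw [det_of_isUpperTriangular (isUpperTriangular_toMatrix_of_flag_eq h)] at hdet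
  exact IsUnit.prod_univ_iff.1 hdet k

end FlagCoordinates

section Flags

variable {F V : Type*} [Field F] [AddCommGroup V] [Module F V] {n : ℕ}

/-- The sequence `f` is a complete flag `f 0 ⊂ f 1 ⊂ ⋯ ⊂ f n` with `dim (f i) = i`. -/
structure IsCompleteFlag (f : Fin (n + 1) → Submodule F V) : Prop where
  monotone : Monotone f
  finrank_eq (i : Fin (n + 1)) : finrank F (f i) = i

theorem isCompleteFlag_flag (b : Basis (Fin n) F V) : IsCompleteFlag b.flag where
  monotone := b.flag_mono
  finrank_eq k := by
    let v : {i : Fin n // i.castSucc < k} → V := fun i => b i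
    have hv : LinearIndependent F v := b.linearIndependent.comp _ Subtype.val_injective
    have hflag : b.flag k = Submodule.span F (Set.range v) := by
      rw [Basis.flag, Set.image_eq_range]
      rfl
    rw [hflag, finrank_span_eq_card hv, Fintype.card_subtype]
    simp [Fin.lt_def, Fin.card_filter_val_lt, Nat.le_of_lt_succ k.2]

theorem IsCompleteFlag.flag_eq {f : Fin (n + 1) → Submodule F V} (hf : IsCompleteFlag f)
    (b : Basis (Fin n) F V) (hb : ∀ k : Fin n, b k ∈ f k.succ) : b.flag = f := by
  have := b.finiteDimensional_of_finite
  funext i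
  refine Submodule.eq_of_le_of_finrank_eq ?_
    (((isCompleteFlag_flag b).finrank_eq i).trans (hf.finrank_eq i).symm)
  exact b.flag_le_iff.2 fun k hk => hf.monotone (Fin.castSucc_lt_iff_succ_le.1 hk) (hb k)

end Flags

section LeadingCoordinates

variable {F V : Type*} [Field F] [AddCommGroup V] [Module F V]

theorem exists_mem_leading_coord_eq_one {ι κ : Type*} [Finite ι] [LinearOrder ι] [Fintype κ]
    (e : Basis ι F V) (W : Submodule F V) (c : κ → ι) (hW : Fintype.card κ < finrank F W) :
    ∃ a, ∃ x ∈ W, e.repr x a = 1 ∧ (∀ b, a < b → e.repr x b = 0) ∧ ∀ k, e.repr x (c k) = 0 := by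
  have := e.finiteDimensional_of_finite
  let coords : W →ₗ[F] κ → F := LinearMap.pi fun k => e.coord (c k) ∘ₗ W.subtype
  have hker : LinearMap.ker coords ≠ ⊥ := LinearMap.ker_ne_bot_of_finrank_lt (by simpa using hW)
  obtain ⟨⟨x, hxW⟩, hxc, hx0⟩ := Submodule.exists_mem_ne_zero_of_ne_bot hker
  have hsupp : (e.repr x).support.Nonempty := by
    simpa [Finsupp.support_nonempty_iff] using hx0
  let a := (e.repr x).support.max' hsupp
  have ha : e.repr x a ≠ 0 := Finsupp.mem_support_iff.1 (max'_mem _ hsupp)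
  refine ⟨a, (e.repr x a)⁻¹ • x, W.smul_mem _ hxW, by simp [ha], fun b hb => ?_, fun k => ?_⟩
  · have hxb : e.repr x b = 0 := by
      by_contra hxb
      exact (le_max' _ b (Finsupp.mem_support_iff.2 hxb)).not_gt hb
    simp [hxb]
  · have hxk : e.repr x (c k) = 0 := congrFun hxc k
    simp [hxk]

theorem exists_pivots_of_lt_finrank {n : ℕ} (e : Basis (Fin n) F V) (f : Fin n → Submodule F V)
    (hf : ∀ k : Fin n, (k : ℕ) < finrank F (f k)) :
    ∃ (w : Fin n → Fin n) (v : Fin n → V), ∀ k, v k ∈ f k ∧ e.repr (v k) (w k) = 1 ∧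
      (∀ a, w k < a → e.repr (v k) a = 0) ∧ ∀ j, j < k → e.repr (v k) (w j) = 0 := by
  have hstep (k : Fin n) (c : (j : Fin n) → j < k → Fin n) :=
    exists_mem_leading_coord_eq_one e (f k) (fun j : {j // j < k} => c j j.2)
      (by simpa only [Fintype.card_subtype, filter_gt_eq_Iio, Fin.card_Iio] using hf k)
  choose pivot v hv using hstep
  let w : Fin n → Fin n := WellFoundedLT.fix pivot
  have hw (k : Fin n) : w k = pivot k fun j _ => w j := WellFoundedLT.fix_eq pivot k
  refine ⟨w, fun k => v k fun j _ => w j, fun k => ?_⟩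
  obtain ⟨hmem, hone, hgt, hlt⟩ := hv k fun j _ => w j
  rw [← hw] at hone hgt
  exact ⟨hmem, hone, hgt, fun j hj => hlt ⟨j, hj⟩⟩

end LeadingCoordinates

section Echelon

variable {ι R M : Type*} [Fintype ι] [LinearOrder ι] [CommRing R] [AddCommGroup M] [Module R M]

/-- The basis `v k = ∑ j, u j k • e (w j)`, in reduced column echelon form with respect to `e`:
its `k`-th vector has last nonzero coordinate `1`, in position `w k`. -/
noncomputable def echelonBasis (e : Basis ι R M) (w : Equiv.Perm ι)
    (u : bitriangular w (1 : ι → R)) : Basis ι R M :=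
  (e.reindex w.symm).map
    (u.1.toLinearEquiv (e.reindex w.symm) (isUnit_det_of_mem_bitriangular_one u.2))

variable (e : Basis ι R M) (w : Equiv.Perm ι) (u : bitriangular w (1 : ι → R))

theorem echelonBasis_apply (k : ι) :
    echelonBasis e w u k = ∑ j, u.1 j k • e.reindex w.symm j := by
  simp only [echelonBasis, Basis.map_apply, toLinearEquiv_apply, toLin_self]

theorem toMatrix_reindex_echelonBasis :
    (e.reindex w.symm).toMatrix (echelonBasis e w u) = u.1 := by
  ext j k
  rw [Basis.toMatrix_apply, echelonBasis_apply, Basis.repr_sum_self]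

theorem toMatrix_echelonBasis_reindex :
    (echelonBasis e w u).toMatrix (e.reindex w.symm) = u.1⁻¹ := by
  refine (inv_eq_left_inv ?_).symm
  rw [← toMatrix_reindex_echelonBasis e w u, Basis.toMatrix_mul_toMatrix_flip]

theorem toMatrix_echelonBasis_of_eigenbasis {T : M →ₗ[R] M} {d : ι → R}
    (hT : ∀ j, T (e j) = d j • e j) :
    LinearMap.toMatrix (echelonBasis e w u) (echelonBasis e w u) T =
      u.1⁻¹ * diagonal (d ∘ w) * u.1 := by
  have hdiag : LinearMap.toMatrix (e.reindex w.symm) (e.reindex w.symm) T =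
      diagonal (d ∘ w) := by
    ext i j
    by_cases hij : i = j <;> simp [LinearMap.toMatrix_apply, hT, hij]
  rw [← basis_toMatrix_mul_linearMap_toMatrix_mul_basis_toMatrix (echelonBasis e w u)
    (e.reindex w.symm) (echelonBasis e w u) (e.reindex w.symm), hdiag,
    toMatrix_echelonBasis_reindex, toMatrix_reindex_echelonBasis]

end Echelon

section EchelonFlags

variable {R M : Type*} [CommRing R] [AddCommGroup M] [Module R M] {n : ℕ} (e : Basis (Fin n) R M)

theorem pivot_le_of_flag_eq [Nontrivial R] {w w' : Equiv.Perm (Fin n)}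
    {u : bitriangular w (1 : Fin n → R)} {u' : bitriangular w' (1 : Fin n → R)}
    (h : (echelonBasis e w u).flag = (echelonBasis e w' u').flag) (k : Fin n) : w k ≤ w' k := by
  set b := echelonBasis e w u
  set b' := echelonBasis e w' u'
  have hdiag : b.toMatrix b' k k ≠ 0 := (isUnit_toMatrix_apply_self_of_flag_eq h k).ne_zero
  rw [← b.toMatrix_mul_toMatrix (e.reindex w.symm), toMatrix_echelonBasis_reindex,
    mul_apply] at hdiag
  obtain ⟨j, -, hj⟩ := exists_ne_zero_of_sum_ne_zero hdiag
  have hkj : w k ≤ w j :=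
    not_lt.1 fun hlt => left_ne_zero_of_mul hj ((inv_mem_bitriangular_one u.2).2.1 hlt)
  have hb' : (e.reindex w.symm).toMatrix b' j k = u'.1 (w'.symm (w j)) k := by
    rw [← toMatrix_reindex_echelonBasis e w' u']
    simp [Basis.toMatrix_apply, b']
  have hjk : w j ≤ w' k := by
    refine not_lt.1 fun hlt => right_ne_zero_of_mul hj (hb'.trans (u'.2.2.1 ?_))
    rwa [Equiv.apply_symm_apply]
  exact hkj.trans hjk

theorem eq_of_flag_echelonBasis_eq {w : Equiv.Perm (Fin n)} {u u' : bitriangular w (1 : Fin n → R)}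
    (h : (echelonBasis e w u).flag = (echelonBasis e w u').flag) : u = u' := by
  have hmul : u.1⁻¹ * u'.1 = (echelonBasis e w u).toMatrix (echelonBasis e w u') := by
    rw [← toMatrix_echelonBasis_reindex e w u, ← toMatrix_reindex_echelonBasis e w u',
      Basis.toMatrix_mul_toMatrix]
  have hmem : u.1⁻¹ * u'.1 ∈ bitriangular w (1 : Fin n → R) := by
    simpa only [mul_one] using mul_mem_bitriangular (inv_mem_bitriangular_one u.2) u'.2
  have hupper : (u.1⁻¹ * u'.1).IsUpperTriangular :=
    hmul ▸ isUpperTriangular_toMatrix_of_flag_eq h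
  have hone : u.1⁻¹ * u'.1 = 1 := by
    ext i j
    rcases lt_trichotomy i j with hij | rfl | hij
    · rw [hmem.1 (OrderDual.toDual_lt_toDual.2 hij), one_apply_ne hij.ne]
    · rw [one_apply_eq]
      exact congrFun hmem.2.2 i
    · rw [hupper hij, one_apply_ne hij.ne']
  have hdet := isUnit_det_of_mem_bitriangular_one u.2
  refine Subtype.ext ?_
  rw [← mul_one u.1, ← hone, mul_nonsing_inv_cancel_left _ _ hdet]

end EchelonFlags

section SchubertCells

variable {F V : Type*} [Field F] [AddCommGroup V] [Module F V] {n : ℕ} (e : Basis (Fin n) F V)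

theorem exists_flag_echelonBasis_eq {f : Fin (n + 1) → Submodule F V} (hf : IsCompleteFlag f) :
    ∃ (w : Equiv.Perm (Fin n)) (u : bitriangular w (1 : Fin n → F)),
      (echelonBasis e w u).flag = f := by
  obtain ⟨pivot, v, hv⟩ := exists_pivots_of_lt_finrank e (fun k => f k.succ)
    fun k => by simp [hf.finrank_eq]
  have hinj : Function.Injective pivot := Function.Injective.of_lt_imp_ne fun i j hij h =>
    zero_ne_one (((hv j).2.2.2 i hij).symm.trans (h ▸ (hv j).2.1))
  let w : Equiv.Perm (Fin n) := Equiv.ofBijective pivot (Finite.injective_iff_bijective.1 hinj)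
  have hentry (j k : Fin n) : (e.reindex w.symm).toMatrix v j k = e.repr (v k) (pivot j) := by
    simp [Basis.toMatrix_apply, w]
  let u : bitriangular w (1 : Fin n → F) :=
    ⟨(e.reindex w.symm).toMatrix v,
      fun j k hjk => (hentry j k).trans ((hv k).2.2.2 j (OrderDual.toDual_lt_toDual.1 hjk)),
      fun j k hjk => (hentry j k).trans ((hv k).2.2.1 (pivot j) hjk),
      funext fun k => (hentry k k).trans (hv k).2.1⟩
  refine ⟨w, u, hf.flag_eq _ fun k => ?_⟩
  rw [echelonBasis_apply, Basis.sum_toMatrix_smul_self]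
  exact (hv k).1

theorem bijective_flag_echelonBasis : Function.Bijective
    fun a : Σ w : Equiv.Perm (Fin n), bitriangular w (1 : Fin n → F) =>
      (⟨(echelonBasis e a.1 a.2).flag, isCompleteFlag_flag _⟩ :
        {f : Fin (n + 1) → Submodule F V // IsCompleteFlag f}) := by
  constructor
  · rintro ⟨w, u⟩ ⟨w', u'⟩ h
    have hflag := congrArg Subtype.val h
    obtain rfl : w = w' := Equiv.ext fun k =>
      (pivot_le_of_flag_eq e hflag k).antisymm (pivot_le_of_flag_eq e hflag.symm k)
    exact congrArg (Sigma.mk w) (eq_of_flag_echelonBasis_eq e hflag)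
  · rintro ⟨f, hf⟩
    obtain ⟨w, u, rfl⟩ := exists_flag_echelonBasis_eq e hf
    exact ⟨⟨w, u⟩, rfl⟩

end SchubertCells

section HessenbergCells

variable {R M : Type*} [CommRing R] [AddCommGroup M] [Module R M] {n : ℕ}

/-- The part of the Schubert cell of `w` lying in the Hessenberg variety of `h`, for an operator
with eigenvalues `d`: the `u` in `bitriangular w 1` such that `u⁻¹ * diagonal (d ∘ w) * u`, the
matrix of the operator in the basis `echelonBasis e w u`, satisfies the Hessenberg condition. -/
def hessenbergCell (h : Fin (n + 1) → Fin (n + 1)) (d : Fin n → R) (w : Equiv.Perm (Fin n)) :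
    Set (Matrix (Fin n) (Fin n) R) :=
  {u ∈ bitriangular w 1 | u⁻¹ * diagonal (d ∘ w) * u ∈
    supportedOn (fun i j => IsInversion w i j ∧ j.castSucc < h i.succ) (d ∘ w)}

variable {h : Fin (n + 1) → Fin (n + 1)} {d : Fin n → R}

theorem map_flag_echelonBasis_le_iff (e : Basis (Fin n) R M) {T : M →ₗ[R] M}
    (hT : ∀ j, T (e j) = d j • e j) (hmono : Monotone h) (hle : ∀ i, i ≤ h i)
    (w : Equiv.Perm (Fin n)) (u : bitriangular w (1 : Fin n → R)) :
    (∀ i, ((echelonBasis e w u).flag i).map T ≤ (echelonBasis e w u).flag (h i)) ↔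
      u.1 ∈ hessenbergCell h d w := by
  have hconj : u.1⁻¹ * diagonal (d ∘ w) * u.1 ∈ supportedOn (IsInversion w) (d ∘ w) :=
    bitriangular_eq_supportedOn w.injective (d ∘ w) ▸ conj_diagonal_mem_bitriangular _ u.2
  rw [map_flag_le_iff _ _ hmono, toMatrix_echelonBasis_of_eigenbasis e w u hT, hessenbergCell,
    Set.mem_sep_iff, mem_supportedOn_and_iff fun i => i.castSucc_lt_succ.trans_le (hle _)]
  simp only [u.2, hconj, true_and, not_lt]

end HessenbergCells

section HessenbergFlags

variable {F V : Type*} [Field F] [AddCommGroup V] [Module F V] {n : ℕ}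
  {h : Fin (n + 1) → Fin (n + 1)} {d : Fin n → F}

theorem card_hessenberg_flags (e : Basis (Fin n) F V) {T : V →ₗ[F] V}
    (hT : ∀ j, T (e j) = d j • e j) (hmono : Monotone h) (hle : ∀ i, i ≤ h i) :
    Nat.card {f : Fin (n + 1) → Submodule F V //
        IsCompleteFlag f ∧ ∀ i, (f i).map T ≤ f (h i)} =
      Nat.card (Σ w, hessenbergCell h d w) := by
  let IsHessenberg (f : Fin (n + 1) → Submodule F V) : Prop := ∀ i, (f i).map T ≤ f (h i)
  let flagsEquiv : {a : Σ w : Equiv.Perm (Fin n), bitriangular w (1 : Fin n → F) //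
        a.2.1 ∈ hessenbergCell h d a.1} ≃
      {f : {f : Fin (n + 1) → Submodule F V // IsCompleteFlag f} // IsHessenberg f.1} :=
    (Equiv.ofBijective _ (bijective_flag_echelonBasis e)).subtypeEquiv fun a =>
      (map_flag_echelonBasis_le_iff e hT hmono hle a.1 a.2).symm
  let cellsEquiv : (Σ w, hessenbergCell h d w) ≃
      {a : Σ w : Equiv.Perm (Fin n), bitriangular w (1 : Fin n → F) //
        a.2.1 ∈ hessenbergCell h d a.1} :=
    { toFun := fun a => ⟨⟨a.1, a.2.1, a.2.2.1⟩, a.2.2⟩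
      invFun := fun a => ⟨a.1.1, a.1.2.1, a.2⟩ }
  exact Nat.card_congr
    ((Equiv.subtypeSubtypeEquivSubtypeInter IsCompleteFlag IsHessenberg).symm.trans
      (cellsEquiv.trans flagsEquiv).symm)

theorem hessFlagCountP_eq_statistic_generating_function_general [Finite F]
    (e : Basis (Fin n) F V) {T : V →ₗ[F] V} (hd : Function.Injective d)
    (hT : ∀ j, T (e j) = d j • e j) (hmono : Monotone h) (hle : ∀ i, i ≤ h i) :
    Nat.card {f : Fin (n + 1) → Submodule F V //
        IsCompleteFlag f ∧ ∀ i, (f i).map T ≤ f (h i)} =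
      ∑ π : Equiv.Perm (Fin n), Nat.card F ^
        Nat.card {ij : Fin n × Fin n // IsInversion π ij.1 ij.2 ∧ ij.2.castSucc < h ij.1.succ} := by
  rw [card_hessenberg_flags e hT hmono hle, Nat.card_sigma]
  exact sum_congr rfl fun w _ =>
    ncard_conj_diagonal_mem_supportedOn w.injective (hd.comp w.injective) _

end HessenbergFlags

section CappedShift

/-- The Hessenberg function `i ↦ min (i + p) n` of the variety `Hess(n, p)`. -/
def cappedShift (n p : ℕ) (i : Fin (n + 1)) : Fin (n + 1) :=
  ⟨min (i + p) n, Nat.lt_succ_of_le (min_le_right _ _)⟩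

variable {n p : ℕ}

theorem monotone_cappedShift : Monotone (cappedShift n p) := fun _ _ hij =>
  Fin.mk_le_mk.2 (min_le_min_right n (Nat.add_le_add_right hij p))

theorem le_cappedShift (i : Fin (n + 1)) : i ≤ cappedShift n p i :=
  Fin.le_def.2 (le_min (Nat.le_add_right _ _) (Nat.le_of_lt_succ i.2))

theorem castSucc_lt_cappedShift_succ_iff {i j : Fin n} :
    j.castSucc < cappedShift n p i.succ ↔ (j : ℕ) - i ≤ p := by
  simp only [cappedShift, Fin.lt_def, Fin.val_castSucc, Fin.val_succ]
  omega

theorem card_inversions_cappedShift (π : Equiv.Perm (Fin n)) :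
    Nat.card {ij : Fin n × Fin n //
        IsInversion π ij.1 ij.2 ∧ ij.2.castSucc < cappedShift n p ij.1.succ} =
      #{ij : Fin n × Fin n | ij.1 < ij.2 ∧ (ij.2 : ℕ) - (ij.1 : ℕ) ≤ p ∧ π ij.2 < π ij.1} := by
  refine Nat.subtype_card _ fun ij => ?_
  rw [mem_filter_univ, castSucc_lt_cappedShift_succ_iff, IsInversion]
  tauto

theorem hessFlagCountP_eq_card_isCompleteFlag (F : Type) [Field F] [Fintype F] [DecidableEq F]
    (d : Fin n → F) :
    hessFlagCountP F n p d = Nat.card {f : Fin (n + 1) → Submodule F (Fin n → F) //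
      IsCompleteFlag f ∧ ∀ i, (f i).map (diagonal d).mulVecLin ≤ f (cappedShift n p i)} := by
  refine Nat.card_congr (Equiv.subtypeEquivRight fun f => ⟨?_, ?_⟩)
  · rintro ⟨-, -, hmono, hrank, hT⟩
    exact ⟨⟨hmono, hrank⟩, hT⟩
  · rintro ⟨hf, hT⟩
    have hbot : f 0 = ⊥ := Submodule.finrank_eq_zero.1 (hf.finrank_eq 0)
    have htop : f (Fin.last n) = ⊤ :=
      Submodule.eq_top_of_finrank_eq ((hf.finrank_eq (Fin.last n)).trans (by simp))
    exact ⟨hbot, htop, hf.monotone, hf.finrank_eq, hT⟩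

end CappedShift

/-- Fix `1 ≤ p ≤ n - 1`. Let `q > n` be a prime power and `M` an invertible diagonal
`n × n` matrix over `𝔽_q` with `n` distinct (nonzero) eigenvalues. The number of complete
flags of `𝔽_q^n` with `M Vᵢ ⊆ V_{i+p}` for all `i` equals
`∑_{π ∈ Sₙ} q^{#{(i,j) : i < j, j - i ≤ p, π(i) > π(j)}}`. -/
theorem hessFlagCountP_eq_statistic_generating_function (F : Type) [Field F] [Fintype F]
    [DecidableEq F] (n p q : ℕ) (hp1 : 1 ≤ p) (hpn : p ≤ n - 1)
    (hq : Fintype.card F = q) (hn : n < q)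
    (d : Fin n → F) (hinj : Function.Injective d) (h0 : ∀ j, d j ≠ 0) :
    hessFlagCountP F n p d =
      ∑ π : Equiv.Perm (Fin n),
        q ^ (Finset.univ.filter fun ij : Fin n × Fin n =>
              ij.1 < ij.2 ∧ (ij.2 : ℕ) - (ij.1 : ℕ) ≤ p ∧ π ij.2 < π ij.1).card := by
  have heigen (j : Fin n) : (diagonal d).mulVecLin (Pi.basisFun F (Fin n) j) =
      d j • Pi.basisFun F (Fin n) j := by
    simp [← Pi.single_smul]
  rw [hessFlagCountP_eq_card_isCompleteFlag,
    hessFlagCountP_eq_statistic_generating_function_general (Pi.basisFun F (Fin n)) hinj heigen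
      monotone_cappedShift le_cappedShift]
  simp only [card_inversions_cappedShift, Nat.card_eq_fintype_card, hq]
end
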